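/- arXiv:2512.14378 — 2 statements merged into one kernel-verified Lean document; each statement's English description precedes it below -/
import Mathlib

section
/- Let n ≥ 12 be divisible by 4, let H be a saturated orthogonal array OA(n,n−1,2,2), and let H' be the n×(n−3) design obtained from H by deleting two distinct fixed columns. Let X be the n × ((n−3)(n−4)/2) two-level design whose columns are exactly the interaction columns of all (n−3 choose 2) unordered pairs of distinct columns of H'. Then E(s²)(X) = n²(n−6)/((n−2)(n−3)). -/
open Finset

/-- The `E(s²)` value of an `n × m` two-level design `X` (columns indexed by `ι`,
`m = card ι`): the average of the squared off-diagonal entries of `XᵀX`. -/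
noncomputable def Es2 {n : ℕ} {ι : Type} [Fintype ι] [DecidableEq ι]
    (X : Fin n → ι → ℚ) : ℚ :=
  (∑ i : ι, ∑ j : ι, if i ≠ j then (∑ r : Fin n, X r i * X r j) ^ 2 else 0) /
    ((Fintype.card ι : ℚ) * ((Fintype.card ι : ℚ) - 1))

theorem aux_pairs {α : Type} [Fintype α] [DecidableEq α] (L : α → α → Prop) [DecidableRel L]
    (hirr : ∀ x, ¬ L x x) (htri : ∀ x y, x ≠ y → (L x y ∧ ¬ L y x) ∨ (L y x ∧ ¬ L x y))
    (f : α → ℚ) :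
    2 * ∑ p : {p : α × α // L p.1 p.2}, f p.1.1 * f p.1.2 + ∑ x, f x ^ 2 = (∑ x, f x) ^ 2 := by
  have h1 : ∑ p : {p : α × α // L p.1 p.2}, f p.1.1 * f p.1.2
      = ∑ x, ∑ y, if L x y then f x * f y else 0 := by
    rw [← Fintype.sum_prod_type' (f := fun x y => if L x y then f x * f y else 0),
      ← Finset.sum_filter]
    exact (Finset.sum_subtype (Finset.univ.filter (fun p : α × α => L p.1 p.2)) (by simp)
      (fun p => f p.1 * f p.2)).symm
  have h2 : ∑ x, ∑ y, (if L x y then f x * f y else 0)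
      = ∑ x, ∑ y, if L y x then f x * f y else 0 := by
    rw [Finset.sum_comm]
    refine Finset.sum_congr rfl fun x _ => Finset.sum_congr rfl fun y _ => ?_
    rw [mul_comm]
  have h3 : ∑ x, f x ^ 2 = ∑ x, ∑ y, if x = y then f x * f y else 0 := by
    simp [sq]
  rw [two_mul, h1]
  nth_rewrite 2 [h2]
  rw [h3, sq, Finset.sum_mul_sum, ← Finset.sum_add_distrib, ← Finset.sum_add_distrib]
  refine Finset.sum_congr rfl fun x _ => ?_
  rw [← Finset.sum_add_distrib, ← Finset.sum_add_distrib]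
  refine Finset.sum_congr rfl fun y _ => ?_
  by_cases hxy : x = y
  · subst hxy
    simp [hirr]
  · rcases htri x y hxy with ⟨h, h'⟩ | ⟨h, h'⟩ <;> simp [h, h', hxy]

theorem aux_rows (n : ℕ) (hn : 12 ≤ n) (H : Fin n → Fin (n - 1) → ℚ)
    (hpm : ∀ i j, H i j = 1 ∨ H i j = -1)
    (hbal : ∀ j, ∑ i : Fin n, H i j = 0)
    (horth : ∀ j k : Fin (n - 1), j ≠ k → ∑ i : Fin n, H i j * H i k = 0) (r s : Fin n) :
    ∑ j, H r j * H s j = (if r = s then (n : ℚ) else 0) - 1 := by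
  have hn0 : (n : ℚ) ≠ 0 := by
    have : n ≠ 0 := by omega
    exact_mod_cast this
  let M : Matrix (Fin n) (Option (Fin (n - 1))) ℚ := fun i o => o.elim 1 (H i)
  let N : Matrix (Option (Fin (n - 1))) (Fin n) ℚ := fun o i => (n : ℚ)⁻¹ * M i o
  have hsq : ∀ j, ∑ i, H i j * H i j = n := by
    intro j
    have : ∀ i, H i j * H i j = 1 := fun i => by rcases hpm i j with h | h <;> simp [h]
    simp [this]
  have hNM : N * M = 1 := by
    ext o o'
    rw [Matrix.mul_apply]
    simp only [N, mul_assoc, ← Finset.mul_sum]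
    rcases o with _ | j <;> rcases o' with _ | k
    · simp [M, hn0]
    · simp [M, hbal]
    · simp [M, hbal]
    · by_cases hjk : j = k
      · subst hjk
        simp [M, hsq, hn0]
      · simp [M, horth j k hjk, Matrix.one_apply, hjk]
  have hcard : Fintype.card (Option (Fin (n - 1))) = Fintype.card (Fin n) := by
    simp; omega
  have hMN : M * N = 1 := (Matrix.mul_eq_one_comm_of_card_eq _ _ _ hcard).mp hNM
  have h := congrFun (congrFun hMN r) s
  rw [Matrix.mul_apply, Fintype.sum_option, Matrix.one_apply] at h
  simp only [N, M, Option.elim] at h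
  have e : ∑ x, H r x * ((n : ℚ)⁻¹ * H s x) = (n : ℚ)⁻¹ * ∑ x, H r x * H s x := by
    rw [Finset.mul_sum]
    exact Finset.sum_congr rfl fun _ _ => by ring
  rw [e] at h
  split_ifs at h ⊢ <;> field_simp at h <;> linarith

/-- Let `H'` be a saturated `OA(n, n-1, 2, 2)` with two distinct fixed
columns deleted. The `n × ((n-3)(n-4)/2)` design `X` whose columns are exactly the
two-column interaction columns of `H'` satisfies `E(s²)(X) = n²(n-6)/((n-2)(n-3))`. -/
theorem Es2_interactions_only_delete_two (n : ℕ) (hn : 12 ≤ n) (h4 : 4 ∣ n)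
    (H : Fin n → Fin (n - 1) → ℚ)
    (hpm : ∀ i j, H i j = 1 ∨ H i j = -1)
    (hbal : ∀ j, ∑ i : Fin n, H i j = 0)
    (horth : ∀ j k : Fin (n - 1), j ≠ k → ∑ i : Fin n, H i j * H i k = 0)
    (a b : Fin (n - 1)) (hab : a ≠ b)
    (X : Fin n →
      {p : {j : Fin (n - 1) // j ≠ a ∧ j ≠ b} × {j : Fin (n - 1) // j ≠ a ∧ j ≠ b} //
        p.1.1 < p.2.1} → ℚ)
    (hX : ∀ r p, X r p = H r p.1.1.1 * H r p.1.2.1) :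
    Es2 X = (n : ℚ) ^ 2 * ((n : ℚ) - 6) / (((n : ℚ) - 2) * ((n : ℚ) - 3)) := by
  have hn12 : (12 : ℚ) ≤ n := by exact_mod_cast hn
  have hsq1 : ∀ i j, H i j * H i j = 1 := fun i j => by rcases hpm i j with h | h <;> simp [h]
  have hpairs := aux_pairs (α := {j : Fin (n - 1) // j ≠ a ∧ j ≠ b}) (fun x y => x.1 < y.1)
    (fun x => lt_irrefl _) (fun x y hxy => by
      have : x.1 ≠ y.1 := fun h => hxy (Subtype.ext h)
      rcases lt_or_gt_of_ne this with h | h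
      · exact Or.inl ⟨h, not_lt_of_gt h⟩
      · exact Or.inr ⟨h, not_lt_of_gt h⟩)
  -- sums over the remaining columns
  have hsub : ∀ g : Fin (n - 1) → ℚ,
      ∑ j : {j : Fin (n - 1) // j ≠ a ∧ j ≠ b}, g j.1 = ∑ j, g j - g a - g b := by
    intro g
    have h1 : ∑ j : {j : Fin (n - 1) // j ≠ a ∧ j ≠ b}, g j.1
        = ∑ j ∈ (Finset.univ.erase a).erase b, g j := by
      refine (Finset.sum_subtype _ ?_ g).symm
      intro x
      simp [and_comm]
    have h2 := Finset.add_sum_erase (Finset.univ.erase a) g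
      (a := b) (by simp [hab.symm])
    have h3 := Finset.add_sum_erase Finset.univ g (Finset.mem_univ a)
    rw [h1]
    linarith
  have hone : ∑ j : {j : Fin (n - 1) // j ≠ a ∧ j ≠ b}, (1 : ℚ) = n - 3 := by
    rw [hsub (fun _ => 1)]
    have : ((n - 1 : ℕ) : ℚ) = n - 1 := by
      rw [Nat.cast_sub (by omega)]; simp
    simp [this]; ring
  have hm : (Fintype.card {p : {j : Fin (n - 1) // j ≠ a ∧ j ≠ b} × {j : Fin (n - 1) // j ≠ a ∧ j ≠ b} // p.1.1 < p.2.1} : ℚ) = (n - 3) * (n - 4) / 2 := by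
    have h := hpairs (fun _ => 1)
    simp only [one_pow, mul_one] at h
    rw [hone, Finset.sum_const, Finset.card_univ, nsmul_eq_mul, mul_one] at h
    have h' : 2 * (Fintype.card {p : {j : Fin (n - 1) // j ≠ a ∧ j ≠ b} × {j : Fin (n - 1) // j ≠ a ∧ j ≠ b} // p.1.1 < p.2.1} : ℚ) + (n - 3) = (n - 3) ^ 2 := h
    linarith
  have hrow := aux_rows n hn H hpm hbal horth
  have hG : ∀ r s, ∑ p : {p : {j : Fin (n - 1) // j ≠ a ∧ j ≠ b} × {j : Fin (n - 1) // j ≠ a ∧ j ≠ b} // p.1.1 < p.2.1}, X r p * X s p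
      = (((if r = s then (n : ℚ) else 0) - 1 - H r a * H s a - H r b * H s b) ^ 2 - (n - 3)) / 2 := by
    intro r s
    have h := hpairs (fun j => H r j.1 * H s j.1)
    have e2 : ∑ x : {j : Fin (n - 1) // j ≠ a ∧ j ≠ b}, (H r x.1 * H s x.1) ^ 2 = n - 3 := by
      rw [← hone]
      refine Finset.sum_congr rfl fun x _ => ?_
      linear_combination (H s x.1 * H s x.1) * hsq1 r x.1 + hsq1 s x.1
    have e3 : ∑ p : {p : {j : Fin (n - 1) // j ≠ a ∧ j ≠ b} × {j : Fin (n - 1) // j ≠ a ∧ j ≠ b} // p.1.1 < p.2.1}, X r p * X s p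
        = ∑ p : {p : {j : Fin (n - 1) // j ≠ a ∧ j ≠ b} × {j : Fin (n - 1) // j ≠ a ∧ j ≠ b} // p.1.1 < p.2.1}, (H r p.1.1.1 * H s p.1.1.1) * (H r p.1.2.1 * H s p.1.2.1) := by
      refine Finset.sum_congr rfl fun p _ => ?_
      rw [hX, hX]; ring
    rw [e2, hsub (fun j => H r j * H s j), hrow] at h
    rw [e3]
    linarith
  have hswap : ∑ i : {p : {j : Fin (n - 1) // j ≠ a ∧ j ≠ b} × {j : Fin (n - 1) // j ≠ a ∧ j ≠ b} // p.1.1 < p.2.1}, ∑ j : {p : {j : Fin (n - 1) // j ≠ a ∧ j ≠ b} × {j : Fin (n - 1) // j ≠ a ∧ j ≠ b} // p.1.1 < p.2.1}, (∑ r, X r i * X r j) ^ 2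
      = ∑ r, ∑ s, (∑ p : {p : {j : Fin (n - 1) // j ≠ a ∧ j ≠ b} × {j : Fin (n - 1) // j ≠ a ∧ j ≠ b} // p.1.1 < p.2.1}, X r p * X s p) ^ 2 := by
    have l : ∀ i j : {p : {j : Fin (n - 1) // j ≠ a ∧ j ≠ b} × {j : Fin (n - 1) // j ≠ a ∧ j ≠ b} // p.1.1 < p.2.1}, (∑ r, X r i * X r j) ^ 2
        = ∑ r, ∑ s, (X r i * X s i) * (X r j * X s j) := by
      intro i j
      rw [sq, Finset.sum_mul_sum]
      exact Finset.sum_congr rfl fun _ _ => Finset.sum_congr rfl fun _ _ => by ring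
    have l' : ∀ r s, (∑ p : {p : {j : Fin (n - 1) // j ≠ a ∧ j ≠ b} × {j : Fin (n - 1) // j ≠ a ∧ j ≠ b} // p.1.1 < p.2.1}, X r p * X s p) ^ 2
        = ∑ i : {p : {j : Fin (n - 1) // j ≠ a ∧ j ≠ b} × {j : Fin (n - 1) // j ≠ a ∧ j ≠ b} // p.1.1 < p.2.1}, ∑ j : {p : {j : Fin (n - 1) // j ≠ a ∧ j ≠ b} × {j : Fin (n - 1) // j ≠ a ∧ j ≠ b} // p.1.1 < p.2.1}, (X r i * X s i) * (X r j * X s j) := by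
      intro r s
      rw [sq, Finset.sum_mul_sum]
    simp only [l, l']
    have c1 : ∀ i : {p : {j : Fin (n - 1) // j ≠ a ∧ j ≠ b} × {j : Fin (n - 1) // j ≠ a ∧ j ≠ b} // p.1.1 < p.2.1}, ∑ j : {p : {j : Fin (n - 1) // j ≠ a ∧ j ≠ b} × {j : Fin (n - 1) // j ≠ a ∧ j ≠ b} // p.1.1 < p.2.1}, ∑ r, ∑ s, (X r i * X s i) * (X r j * X s j)
        = ∑ r, ∑ s, ∑ j : {p : {j : Fin (n - 1) // j ≠ a ∧ j ≠ b} × {j : Fin (n - 1) // j ≠ a ∧ j ≠ b} // p.1.1 < p.2.1}, (X r i * X s i) * (X r j * X s j) := by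
      intro i
      rw [Finset.sum_comm]
      exact Finset.sum_congr rfl fun _ _ => Finset.sum_comm
    rw [Finset.sum_congr rfl fun i _ => c1 i, Finset.sum_comm]
    exact Finset.sum_congr rfl fun _ _ => Finset.sum_comm
  have hterm : ∀ r s, (∑ p : {p : {j : Fin (n - 1) // j ≠ a ∧ j ≠ b} × {j : Fin (n - 1) // j ≠ a ∧ j ≠ b} // p.1.1 < p.2.1}, X r p * X s p) ^ 2
      = (((6 - n) / 2) ^ 2 + 3) + (8 - n) * (H r a * H s a + H r b * H s b
          + (H r a * H r b) * (H s a * H s b))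
        + (if r = s then (((n : ℚ) - 3) * (n - 4) / 2) ^ 2 - ((12 - n) / 2) ^ 2 else 0) := by
    intro r s
    rw [hG]
    by_cases hrs : r = s
    · subst hrs
      simp only [if_true]
      rcases hpm r a with h1 | h1 <;> rcases hpm r b with h2 | h2 <;> rw [h1, h2] <;> ring
    · simp only [hrs, if_false]
      rcases hpm r a with h1 | h1 <;> rcases hpm r b with h2 | h2 <;>
      rcases hpm s a with h3 | h3 <;> rcases hpm s b with h4 | h4 <;>
        rw [h1, h2, h3, h4] <;> ring
  have hT : ∑ r, ∑ s, (∑ p : {p : {j : Fin (n - 1) // j ≠ a ∧ j ≠ b} × {j : Fin (n - 1) // j ≠ a ∧ j ≠ b} // p.1.1 < p.2.1}, X r p * X s p) ^ 2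
      = n ^ 2 * (((6 - n) / 2) ^ 2 + 3)
        + n * ((((n : ℚ) - 3) * (n - 4) / 2) ^ 2 - ((12 - n) / 2) ^ 2) := by
    simp only [hterm, Finset.sum_add_distrib, ← Finset.mul_sum, hbal, horth a b hab]
    simp
    ring
  have hoff : (∑ i : {p : {j : Fin (n - 1) // j ≠ a ∧ j ≠ b} × {j : Fin (n - 1) // j ≠ a ∧ j ≠ b} // p.1.1 < p.2.1}, ∑ j : {p : {j : Fin (n - 1) // j ≠ a ∧ j ≠ b} × {j : Fin (n - 1) // j ≠ a ∧ j ≠ b} // p.1.1 < p.2.1}, if i ≠ j then (∑ r : Fin n, X r i * X r j) ^ 2 else 0)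
      = (∑ i : {p : {j : Fin (n - 1) // j ≠ a ∧ j ≠ b} × {j : Fin (n - 1) // j ≠ a ∧ j ≠ b} // p.1.1 < p.2.1}, ∑ j : {p : {j : Fin (n - 1) // j ≠ a ∧ j ≠ b} × {j : Fin (n - 1) // j ≠ a ∧ j ≠ b} // p.1.1 < p.2.1}, (∑ r, X r i * X r j) ^ 2) - (Fintype.card {p : {j : Fin (n - 1) // j ≠ a ∧ j ≠ b} × {j : Fin (n - 1) // j ≠ a ∧ j ≠ b} // p.1.1 < p.2.1} : ℚ) * n ^ 2 := by
    have hd : ∀ i : {p : {j : Fin (n - 1) // j ≠ a ∧ j ≠ b} × {j : Fin (n - 1) // j ≠ a ∧ j ≠ b} // p.1.1 < p.2.1}, ∑ r, X r i * X r i = n := by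
      intro i
      have : ∀ r, X r i * X r i = 1 := by
        intro r
        rw [hX]
        linear_combination (H r i.1.2.1 * H r i.1.2.1) * hsq1 r i.1.1.1 + hsq1 r i.1.2.1
      simp [this]
    have hi : ∀ i : {p : {j : Fin (n - 1) // j ≠ a ∧ j ≠ b} × {j : Fin (n - 1) // j ≠ a ∧ j ≠ b} // p.1.1 < p.2.1}, (∑ j : {p : {j : Fin (n - 1) // j ≠ a ∧ j ≠ b} × {j : Fin (n - 1) // j ≠ a ∧ j ≠ b} // p.1.1 < p.2.1}, if i ≠ j then (∑ r : Fin n, X r i * X r j) ^ 2 else 0)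
        = (∑ j : {p : {j : Fin (n - 1) // j ≠ a ∧ j ≠ b} × {j : Fin (n - 1) // j ≠ a ∧ j ≠ b} // p.1.1 < p.2.1}, (∑ r, X r i * X r j) ^ 2) - n ^ 2 := by
      intro i
      have e : (n : ℚ) ^ 2 = ∑ j : {p : {j : Fin (n - 1) // j ≠ a ∧ j ≠ b} × {j : Fin (n - 1) // j ≠ a ∧ j ≠ b} // p.1.1 < p.2.1}, if i = j then (∑ r : Fin n, X r i * X r j) ^ 2 else 0 := by
        rw [Finset.sum_ite_eq]
        simp [hd]
      rw [e, ← Finset.sum_sub_distrib]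
      refine Finset.sum_congr rfl fun j _ => ?_
      by_cases h : i = j <;> simp [h]
    rw [Finset.sum_congr rfl fun i _ => hi i, Finset.sum_sub_distrib]
    simp
  have key : Es2 X = ((n ^ 2 * (((6 - n) / 2) ^ 2 + 3)
        + n * ((((n : ℚ) - 3) * (n - 4) / 2) ^ 2 - ((12 - n) / 2) ^ 2))
        - ((n - 3) * (n - 4) / 2) * n ^ 2) /
        (((n - 3) * (n - 4) / 2) * ((n - 3) * (n - 4) / 2 - 1)) := by
    unfold Es2
    rw [hoff, hswap, hT, hm]
  rw [key]
  have p2 : (n : ℚ) - 2 ≠ 0 := by linarith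
  have p3 : (n : ℚ) - 3 ≠ 0 := by linarith
  have p4 : (n : ℚ) - 4 ≠ 0 := by linarith
  have p5 : (n : ℚ) - 5 ≠ 0 := by linarith
  have f : ((n : ℚ) - 3) * (n - 4) / 2 - 1 = (n - 2) * (n - 5) / 2 := by ring
  rw [f, div_eq_div_iff (by positivity) (by positivity)]
  ring
end

section
/- Let n ≥ 12 be divisible by 4, let H be a saturated orthogonal array OA(n,n−1,2,2), let H' be the n×(n−2) design obtained from H by deleting one fixed column, and let c_{i₀} be a fixed column of H'. Let X be the n × (2n−5) two-level design whose columns are the n−2 columns of H' together with the n−3 interaction columns of c_{i₀} with each other column of H'. Then E(s²)(X) = n²(n−4)/((2n−5)(n−3)). -/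
open Finset

theorem aux_sum_ne {α : Type} [Fintype α] [DecidableEq α] (c : α) (f : α → ℚ) :
    ∑ j : {j : α // j ≠ c}, f j.1 = ∑ j, f j - f c := by
  have h : ∑ j ∈ Finset.univ.erase c, f j = ∑ j : {j : α // j ≠ c}, f j.1 :=
    Finset.sum_subtype (p := fun j => j ≠ c) (Finset.univ.erase c) (by simp) f
  rw [← h, ← Finset.add_sum_erase Finset.univ f (Finset.mem_univ c)]
  ring

theorem aux_parseval (n : ℕ) (hn : 12 ≤ n)
    (H : Fin n → Fin (n - 1) → ℚ)
    (hpm : ∀ i j, H i j = 1 ∨ H i j = -1)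
    (hbal : ∀ j, ∑ i : Fin n, H i j = 0)
    (horth : ∀ j k : Fin (n - 1), j ≠ k → ∑ i : Fin n, H i j * H i k = 0)
    (v : Fin n → ℚ) (hv : ∑ r, v r = 0) :
    ∑ k, (∑ r, v r * H r k) ^ 2 = n * ∑ r, v r ^ 2 := by
  have hn0 : (n : ℚ) ≠ 0 := by
    have : n ≠ 0 := by omega
    exact_mod_cast this
  have hsq : ∀ i j, H i j * H i j = 1 := by
    intro i j
    rcases hpm i j with h | h <;> rw [h] <;> norm_num
  obtain ⟨M, hM1, hM2⟩ : ∃ M : Matrix (Fin n) (Option (Fin (n - 1))) ℚ,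
      (∀ r, M r none = 1) ∧ ∀ r j, M r (some j) = H r j :=
    ⟨fun r o => o.elim 1 (H r), fun _ => rfl, fun _ _ => rfl⟩
  have h1 : ((n : ℚ)⁻¹ • M.transpose) * M = 1 := by
    ext a b
    rw [Matrix.smul_mul, Matrix.smul_apply, Matrix.mul_apply]
    rcases a with _ | a <;> rcases b with _ | b
    · simp [hM1, hM2, hn0]
    · simp [hM1, hM2, hbal]
    · simp [hM1, hM2, hbal]
    · by_cases hab : a = b
      · subst hab
        simp [hM1, hM2, hsq, hn0]
      · simp [hM1, hM2, horth a b hab, hab]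
  have e : Option (Fin (n - 1)) ≃ Fin n := Fintype.equivOfCardEq (by simp; omega)
  have h2 : M * ((n : ℚ)⁻¹ • M.transpose) = 1 :=
    (Matrix.mul_eq_one_comm_of_equiv e).mp h1
  have h3 : ∀ r s, 1 + ∑ k, H r k * H s k = if r = s then (n : ℚ) else 0 := by
    intro r s
    have h := congrFun (congrFun h2 r) s
    rw [Matrix.mul_smul, Matrix.smul_apply, Matrix.mul_apply, Fintype.sum_option,
      Matrix.one_apply] at h
    simp only [hM1, hM2, Matrix.transpose_apply, smul_eq_mul] at h
    rw [inv_mul_eq_iff_eq_mul₀ hn0] at h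
    simpa using h
  have h4 : ∑ k, (∑ r, v r * H r k) ^ 2
      = ∑ r, ∑ s, v r * v s * ∑ k, H r k * H s k := by
    simp_rw [sq, Finset.sum_mul_sum, Finset.mul_sum]
    rw [Finset.sum_comm]
    refine Finset.sum_congr rfl fun r _ => ?_
    rw [Finset.sum_comm]
    refine Finset.sum_congr rfl fun s _ => Finset.sum_congr rfl fun k _ => ?_
    ring
  have h5 : ∀ r s, ∑ k, H r k * H s k = (if r = s then (n : ℚ) else 0) - 1 := by
    intro r s
    rw [← h3 r s]; ring
  rw [h4]
  simp_rw [h5, mul_sub, Finset.sum_sub_distrib, mul_one, ← Finset.mul_sum, hv]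
  simp [Finset.mul_sum]
  refine Finset.sum_congr rfl fun r _ => ?_
  ring

/-- Let `H'` be a saturated `OA(n, n-1, 2, 2)` with one fixed column
deleted, and let `c_{i₀}` be a fixed column of `H'`. Augmenting `H'` with the `n-3`
interaction columns of `c_{i₀}` with each other column of `H'` yields an
`n × (2n-5)` design `X` with `E(s²)(X) = n²(n-4)/((2n-5)(n-3))`. -/
theorem Es2_one_parent_delete_one (n : ℕ) (hn : 12 ≤ n) (h4 : 4 ∣ n)
    (H : Fin n → Fin (n - 1) → ℚ)
    (hpm : ∀ i j, H i j = 1 ∨ H i j = -1)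
    (hbal : ∀ j, ∑ i : Fin n, H i j = 0)
    (horth : ∀ j k : Fin (n - 1), j ≠ k → ∑ i : Fin n, H i j * H i k = 0)
    (cdel : Fin (n - 1)) (i0 : {j : Fin (n - 1) // j ≠ cdel})
    (X : Fin n → ({j : Fin (n - 1) // j ≠ cdel} ⊕
      {j : {j : Fin (n - 1) // j ≠ cdel} // j ≠ i0}) → ℚ)
    (hX : ∀ r, X r = Sum.elim (fun j => H r j.1) (fun j => H r i0.1 * H r j.1.1)) :
    Es2 X = (n : ℚ) ^ 2 * ((n : ℚ) - 4) / ((2 * (n : ℚ) - 5) * ((n : ℚ) - 3)) := by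
  have hsq : ∀ i j, H i j * H i j = 1 := by
    intro i j
    rcases hpm i j with h | h <;> rw [h] <;> norm_num
  have hc : Fintype.card {j : Fin (n - 1) // j ≠ cdel} = n - 2 := by
    rw [Fintype.card_subtype_compl]; simp; omega
  have hc2 : Fintype.card {j : {j : Fin (n - 1) // j ≠ cdel} // j ≠ i0} = n - 3 := by
    rw [Fintype.card_subtype_compl, hc]; simp; omega
  obtain ⟨i0, hi0⟩ := i0
  set T : Fin (n - 1) → Fin (n - 1) → ℚ := fun j k => ∑ r, H r i0 * H r j * H r k with hT
  have hTi : ∀ k, T i0 k = 0 := by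
    intro k; simp [hT, hsq, hbal]
  have hTs : ∀ j k, T j k = T k j := by
    intro j k
    exact Finset.sum_congr rfl fun r _ => by ring
  have hTd : ∀ j, T j j = 0 := by
    intro j
    have : T j j = ∑ r, H r i0 := Finset.sum_congr rfl fun r _ => by
      rw [mul_assoc, hsq, mul_one]
    rw [this, hbal]
  have hP : ∀ j, j ≠ i0 → ∑ k, T j k ^ 2 = (n : ℚ) ^ 2 := by
    intro j hj
    have h := aux_parseval n hn H hpm hbal horth (fun r => H r i0 * H r j)
      (horth i0 j hj.symm)
    simp only [hT]
    rw [h]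
    have : ∀ r, (H r i0 * H r j) ^ 2 = 1 := by
      intro r
      have a := hsq r i0
      have b := hsq r j
      calc _ = (H r i0 * H r i0) * (H r j * H r j) := by ring
        _ = 1 := by rw [a, b]; ring
    simp [this, sq]
  have hmain : (∑ j : {j : {j : Fin (n - 1) // j ≠ cdel} // j ≠ ⟨i0, hi0⟩},
      ∑ k : {j : Fin (n - 1) // j ≠ cdel}, T j.1.1 k.1 ^ 2) = (n : ℚ) ^ 2 * (n - 4) := by
    have s1 : ∀ j : {j : {j : Fin (n - 1) // j ≠ cdel} // j ≠ ⟨i0, hi0⟩},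
      ∑ k : {j : Fin (n - 1) // j ≠ cdel}, T j.1.1 k.1 ^ 2
        = (n : ℚ) ^ 2 - T j.1.1 cdel ^ 2 := by
      intro j
      rw [aux_sum_ne cdel (fun k => T j.1.1 k ^ 2), hP]
      intro h
      exact j.2 (Subtype.ext h)
    simp_rw [s1]
    rw [Finset.sum_sub_distrib, Finset.sum_const, Finset.card_univ, hc2,
      aux_sum_ne (⟨i0, hi0⟩ : {j : Fin (n - 1) // j ≠ cdel}) (fun j => T j.1 cdel ^ 2),
      aux_sum_ne cdel (fun j => T j cdel ^ 2)]
    simp_rw [fun j => hTs j cdel]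
    rw [hP cdel (Ne.symm hi0), hTd, hTs, hTi, nsmul_eq_mul, Nat.cast_sub (by omega)]
    push_cast
    ring
  unfold Es2
  rw [Fintype.card_sum, hc, hc2]
  have hnum : (∑ i, ∑ j, if i ≠ j then (∑ r : Fin n, X r i * X r j) ^ 2 else 0)
      = 2 * ((n : ℚ) ^ 2 * (n - 4)) := by
    rw [Fintype.sum_sum_type]
    simp_rw [Fintype.sum_sum_type, hX]
    simp only [Sum.elim_inl, Sum.elim_inr]
    have z1 : ∀ a b : {j : Fin (n - 1) // j ≠ cdel},
        (if (Sum.inl a : _ ⊕ {j : {j : Fin (n - 1) // j ≠ cdel} // j ≠ ⟨i0, hi0⟩}) ≠ Sum.inl b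
          then (∑ r, H r a.1 * H r b.1) ^ 2 else 0) = 0 := by
      intro a b
      by_cases h : a = b
      · simp [h]
      · rw [horth a.1 b.1 (fun h' => h (Subtype.ext h'))]; simp
    have z2 : ∀ a b : {j : {j : Fin (n - 1) // j ≠ cdel} // j ≠ ⟨i0, hi0⟩},
        (if (Sum.inr a : {j : Fin (n - 1) // j ≠ cdel} ⊕ _) ≠ Sum.inr b
          then (∑ r, H r i0 * H r a.1.1 * (H r i0 * H r b.1.1)) ^ 2 else 0) = 0 := by
      intro a b
      by_cases h : a = b
      · simp [h]
      · have : ∑ r, H r i0 * H r a.1.1 * (H r i0 * H r b.1.1) = ∑ r, H r a.1.1 * H r b.1.1 :=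
          Finset.sum_congr rfl fun r _ => by
            calc _ = (H r i0 * H r i0) * (H r a.1.1 * H r b.1.1) := by ring
              _ = _ := by rw [hsq, one_mul]
        rw [this, horth a.1.1 b.1.1 (fun h' => h (Subtype.ext (Subtype.ext h')))]; simp
    simp_rw [z1, z2]
    simp only [ne_eq, reduceCtorEq, not_false_eq_true, if_true, Finset.sum_const_zero,
      zero_add, add_zero]
    rw [Finset.sum_comm, ← hmain, two_mul]
    congr 1
    refine Finset.sum_congr rfl fun j _ => Finset.sum_congr rfl fun k _ => ?_
    congr 1
    exact Finset.sum_congr rfl fun r _ => by ring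
  rw [hnum]
  have hq : (12 : ℚ) ≤ n := by exact_mod_cast hn
  have e1 : ((n - 2 + (n - 3) : ℕ) : ℚ) = 2 * n - 5 := by
    rw [Nat.cast_add, Nat.cast_sub (by omega), Nat.cast_sub (by omega)]
    push_cast; ring
  rw [e1, div_eq_div_iff]
  · ring
  · apply mul_ne_zero <;> linarith
  · apply mul_ne_zero <;> linarith
end
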